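/- Let t : ℕ → ℕ be a t-vector with t_i = 0 for all i > 6, satisfying ∑_{i≥2} C(i,2)·t_i = C(n,2) (so t_2 + 3t_3 + 6t_4 + 10t_5 + 15t_6 = C(n,2)) and the simplicial Melchior equality t_2 = 3 + t_4 + 2t_5 + 3t_6. Then t_4 is not congruent to 2 modulo 3. -/

import Mathlib

/-!
In an arrangement with `t i` vertices of multiplicity `i`, the number of edges is `∑ i * t i`, and
it is divisible by three when every face is a triangle, since each edge lies on two faces. On the
other hand `i.choose 2 + i` is, modulo three, the indicator of `i ≡ 1`. Adding the edge count to
the count of pairs of lines therefore shows that the vertices of multiplicity `≡ 1` number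
`n.choose 2` modulo three, which is never `2` because `X ^ 2 - X + 2` has no root in `ZMod 3`.
-/

open Finset

lemma natCast_choose_two_zmod_three (n : ℕ) : (n.choose 2 : ZMod 3) = n - n ^ 2 := by
  have : NeZero (2 : ZMod 3) := ⟨by decide⟩
  have three_eq_zero : (3 : ZMod 3) = 0 := by decide
  rw [Nat.cast_choose_two, div_eq_iff two_ne_zero]
  linear_combination ((n : ZMod 3) ^ 2 - n) * three_eq_zero

lemma natCast_choose_two_ne_two_zmod_three (n : ℕ) : (n.choose 2 : ZMod 3) ≠ 2 := by
  have no_root : ∀ x : ZMod 3, x - x ^ 2 ≠ 2 := by decide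
  rw [natCast_choose_two_zmod_three]
  exact no_root n

lemma natCast_choose_two_add_self_zmod_three (i : ℕ) :
    (i.choose 2 + i : ZMod 3) = if i % 3 = 1 then 1 else 0 := by
  have indicator_eq : ∀ x : ZMod 3, x - x ^ 2 + x = if x = 1 then 1 else 0 := by decide
  have cast_eq_one_iff : (i : ZMod 3) = 1 ↔ i % 3 = 1 := by
    exact_mod_cast ZMod.natCast_eq_natCast_iff' i 1 3
  simp only [natCast_choose_two_zmod_three, indicator_eq, cast_eq_one_iff]

lemma sum_filter_mod_three_eq_one (s : Finset ℕ) (t : ℕ → ZMod 3) :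
    ∑ i ∈ s with i % 3 = 1, t i =
      ∑ i ∈ s, (i.choose 2 : ZMod 3) * t i + ∑ i ∈ s, (i : ZMod 3) * t i := by
  simp only [← sum_add_distrib, ← add_mul, natCast_choose_two_add_self_zmod_three, ite_mul,
    one_mul, zero_mul, sum_filter]

theorem stmt_3_general (n : ℕ) (s : Finset ℕ) (t : ℕ → ℕ)
    (hpair : ∑ i ∈ s, i.choose 2 * t i = n.choose 2)
    (hedges : 3 ∣ ∑ i ∈ s, i * t i) :
    (∑ i ∈ s with i % 3 = 1, t i) % 3 ≠ 2 := by
  intro hmod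
  have pair_cast : ∑ i ∈ s, (i.choose 2 : ZMod 3) * t i = n.choose 2 := by
    exact_mod_cast congrArg (Nat.cast (R := ZMod 3)) hpair
  have edges_cast : ∑ i ∈ s, (i : ZMod 3) * t i = 0 := by
    exact_mod_cast (ZMod.natCast_eq_zero_iff _ 3).mpr hedges
  have sum_cast : ∑ i ∈ s with i % 3 = 1, (t i : ZMod 3) = 2 := by
    exact_mod_cast (ZMod.natCast_eq_natCast_iff' _ 2 3).mpr hmod
  apply natCast_choose_two_ne_two_zmod_three n
  rw [← sum_cast, sum_filter_mod_three_eq_one, pair_cast, edges_cast, add_zero]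

theorem stmt_3 (n : ℕ) (t : ℕ → ℕ)
    (hsupp : ∀ i, 6 < i → t i = 0)
    (hpair : t 2 + 3 * t 3 + 6 * t 4 + 10 * t 5 + 15 * t 6 = Nat.choose n 2)
    (hmel : t 2 = 3 + t 4 + 2 * t 5 + 3 * t 6) :
    ¬ (t 4 % 3 = 2) := by
  have edges_eq : ∑ i ∈ Icc 2 6, i * t i = 3 * (2 + t 3 + 2 * t 4 + 3 * t 5 + 4 * t 6) := by
    simp only [sum_Icc_succ_top, Icc_self, sum_singleton, Nat.reduceAdd, Nat.reduceLeDiff, hmel]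
    ring
  have pair_sum : ∑ i ∈ Icc 2 6, i.choose 2 * t i = n.choose 2 := by
    simpa [sum_Icc_succ_top, Nat.choose] using hpair
  simpa [sum_filter, sum_Icc_succ_top] using
    stmt_3_general n (Icc 2 6) t pair_sum (Dvd.intro _ edges_eq.symm)
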